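/- Let T be a finite rooted planar binary tree with h ≥ 2 leaves, a = (a_1,…,a_h) a composition of n, T_r(k) a representation labeling of T with root label k, and 0 ≤ m ≤ n with k ≤ min{m, n−m}. Then the function Φ(T(a), m, T_r(k)) ∈ M^{n−m,m} is invariant under every permutation in the Young subgroup S_a = S_{a_1}×⋯×S_{a_h} and belongs to the subspace R_{m−k}(S^{n−k,k}) of M^{n−m,m}. -/

import Mathlib

/-!
The invariance is immediate by induction on the tree: a permutation preserving every block
preserves the block of every subtree, and `Φ` is built from cardinalities of intersections with
blocks (`PhiT_image_inv`).

For the membership, a function `f` supported on `k`-subsets is encoded by its zeta transform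
`(ζ f)(B) = ∑_{A ⊆ B} f(A)`, whose degree `m` part is `R_{m-k} f`. By induction on the tree
(`exists_lowest`), one function `f` of degree `k` in `ker d` satisfies
`Φ(T(a), m, T_r(k)) = R_{m-k} f` for all `k ≤ m ≤ N - k` at once. At an internal vertex with
sons of labels `i`, `j` and lowest functions `f₁`, `f₂`, put `p = k - i - j` and take
`f = ∑_y E_p(a,b,p,y) R_{p-y} f₁ ⊗ R_y f₂` (`glue`), where
`E_p(a,b,p,y) = (-1)^(p-y) p! (b-p+1)_y (a-p+1)_{p-y}`.

* `d f = 0` (`glue_ker`): `d` is a derivation for `⊗` and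
  `d R_q f₁ = (N - 2i - q + 1) R_{q-1} f₁` (`sum_insert_zetaT`), so the claim is the two-term
  recursion `hahnLow_rec`.
* `R_{m-k} f` has coefficients `E_p(a,b,m-i-j,·)` (`zetaT_glue`): by `R_q R_p = C(p+q,p) R_{p+q}`
  this is the expansion `E_p(a,b,c,x) = ∑_y E_p(a,b,p,y) C(x,y) C(c-x,p-y)` (`hahnE_eq_sum`).
* The summation range in the definition of `Φ` loses nothing, since `R_q f₁ = 0` for
  `q > N - 2i` (`zetaT_eq_zero_of_lt_card`).
-/

open Finset

noncomputable section

/-- The Radon transform `d : M^{n-m,m} → M^{n-m+1,m-1}`, `(df)(B) = ∑_{x ∉ B} f(B ∪ {x})`. -/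
def dR (n : ℕ) (f : Finset (Fin n) → ℂ) : Finset (Fin n) → ℂ :=
  fun B => ∑ x ∈ Bᶜ, f (insert x B)

/-- The adjoint Radon transform `d* : M^{n-m,m} → M^{n-m-1,m+1}`. -/
def dS (n : ℕ) (f : Finset (Fin n) → ℂ) : Finset (Fin n) → ℂ :=
  fun B => ∑ x ∈ B, f (B.erase x)

/-- `R_q = (d*)^q / q!`, i.e. `(R_q f)(B) = ∑_{A ⊆ B, |A| = |B| - q} f(A)`. -/
def RT (n q : ℕ) (f : Finset (Fin n) → ℂ) : Finset (Fin n) → ℂ :=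
  fun B => if q ≤ B.card then ∑ A ∈ B.powersetCard (B.card - q), f A else 0

/-- Pochhammer symbol `(t)_p = t(t+1)⋯(t+p-1)`. -/
def poch (t : ℤ) (p : ℕ) : ℤ := ∏ i ∈ Finset.range p, (t + i)

/-- Dunkl-normalized Hahn polynomial value `E_m(a,b,c,x)`. -/
def hahnE (m : ℕ) (a b c x : ℤ) : ℤ :=
  ∑ j ∈ Finset.Icc (max 0 (x - c + m)) (min (m : ℤ) x),
    (-1) ^ j.toNat * (m.choose j.toNat : ℤ) * poch (b - m + 1) j.toNat * poch (-x) j.toNat *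
      poch (a - m + 1) (m - j.toNat) * poch (x - c) (m - j.toNat)

/-- Inner product `⟨f, g⟩ = ∑ f(s) conj (g s)`. -/
def ip (n : ℕ) (f g : Finset (Fin n) → ℂ) : ℂ :=
  ∑ s : Finset (Fin n), f s * (starRingEnd ℂ) (g s)

/-- Action of `S_n`: `(g · f)(ω) = f (g⁻¹ ω)`. -/
def permAct (n : ℕ) (g : Equiv.Perm (Fin n)) (f : Finset (Fin n) → ℂ) :
    Finset (Fin n) → ℂ :=
  fun s => f (s.image ⇑g⁻¹)

/-- The block `{o+1, …, o+a}` of the ground set `{1, …, n}` (0-indexed: positions `o ≤ x < o+a`). -/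
def block (n o a : ℕ) : Finset (Fin n) :=
  Finset.filter (fun x => o ≤ (x : ℕ) ∧ (x : ℕ) < o + a) Finset.univ

/-- Tensor product relative to the partition `A = {1,…,h}`, `B = {h+1,…,n}`:
`(φ ⊗ ψ)(Z) = φ(Z ∩ A) · ψ(Z ∩ B)`. -/
def tens (n h : ℕ) (φ ψ : Finset (Fin n) → ℂ) : Finset (Fin n) → ℂ :=
  fun Z => φ (Z ∩ block n 0 h) * ψ (Z ∩ block n h (n - h))

/-- A finite rooted planar binary tree, carrying at each leaf a composition part and at each
internal vertex a representation label. -/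
inductive BT where
  | leaf (a : ℕ) : BT
  | node (κ : ℕ) (l r : BT) : BT

/-- The sum of the composition labels of a (sub)tree. -/
def BT.size : BT → ℕ
  | .leaf a => a
  | .node _ l r => l.size + r.size

/-- The representation label at the root (0 at a leaf). -/
def BT.rlabel : BT → ℕ
  | .leaf _ => 0
  | .node κ _ _ => κ

/-- Number of leaves. -/
def BT.nleaves : BT → ℕ
  | .leaf _ => 1
  | .node _ l r => l.nleaves + r.nleaves

/-- All composition parts are positive. -/
def BT.posParts : BT → Prop
  | .leaf a => 0 < a
  | .node _ l r => l.posParts ∧ r.posParts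

/-- Validity of a representation labeling: at each internal vertex with label `κ`, whose
composition label has sum `N` and whose sons carry labels `i`, `j` (composition sums `t`,
`N - t`), one has `κ - t ≤ j - i ≤ N - t - κ` and `i + j ≤ κ`; leaves carry label `0`. -/
def BT.valid : BT → Prop
  | .leaf _ => True
  | .node κ l r => l.valid ∧ r.valid ∧
      (κ : ℤ) - l.size ≤ (r.rlabel : ℤ) - l.rlabel ∧
      (r.rlabel : ℤ) - l.rlabel ≤ (r.size : ℤ) - κ ∧
      l.rlabel + r.rlabel ≤ κ

/-- Same underlying planar tree and same composition labels at the leaves. -/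
def sameShape : BT → BT → Prop
  | .leaf a, .leaf b => a = b
  | .node _ l r, .node _ l' r' => sameShape l l' ∧ sameShape r r'
  | _, _ => False

/-- The intertwining function `Φ(T(a), m, T_r(k))`, for the subtree occupying the block of
size `size` starting at offset `o` in `{1,…,n}`. -/
def PhiT (n : ℕ) : BT → ℕ → ℕ → Finset (Fin n) → ℂ
  | .leaf a, o, m => fun Z => if Z ⊆ block n o a ∧ Z.card = m then 1 else 0
  | .node κ l r, o, m => fun Z =>
      ∑ w ∈ Finset.Icc (max r.rlabel (l.rlabel + m - l.size))
          (min (r.size - r.rlabel) (m - l.rlabel)),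
        ((hahnE (κ - l.rlabel - r.rlabel) ((r.size : ℤ) - 2 * r.rlabel)
            ((l.size : ℤ) - 2 * l.rlabel) ((m : ℤ) - l.rlabel - r.rlabel)
            ((w : ℤ) - r.rlabel) : ℤ) : ℂ) *
          PhiT n l o (m - w) (Z ∩ block n o l.size) *
          PhiT n r (o + l.size) w (Z ∩ block n (o + l.size) r.size)

/-- `g ∈ S_n` preserves every block of the composition carried by the tree. -/
def presBlocks (n : ℕ) : BT → ℕ → Equiv.Perm (Fin n) → Prop
  | .leaf a, o, g => Finset.image ⇑g (block n o a) = block n o a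
  | .node _ l r, o, g => presBlocks n l o g ∧ presBlocks n r (o + l.size) g
/-! ### Hahn polynomial values -/

/-- The value `E_p(a,b,p,y)`, in closed form: the coefficients of the lowest-degree function
`Φ(T(a), k, T_r(k))`. -/
def hahnLow (p : ℕ) (a b : ℤ) (y : ℕ) : ℤ :=
  (-1) ^ (p - y) * (p.factorial : ℤ) * poch (b - p + 1) y * poch (a - p + 1) (p - y)

lemma poch_succ (t : ℤ) (p : ℕ) : poch t (p + 1) = poch t p * (t + p) := by
  simp [poch, Finset.prod_range_succ]

lemma poch_neg_natCast (x j : ℕ) :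
    poch (-(x : ℤ)) j = (-1) ^ j * ((j.factorial : ℤ) * (x.choose j : ℤ)) := by
  have h : poch (-(x : ℤ)) j = (-1) ^ j * (x.descFactorial j : ℤ) := by
    induction j with
    | zero => simp [poch]
    | succ j ih =>
      rw [poch_succ, ih, Nat.descFactorial_succ]
      rcases le_or_gt j x with hj | hj
      · push_cast [Nat.cast_sub hj]; ring
      · rw [Nat.descFactorial_of_lt hj]; simp
  rw [h, Nat.descFactorial_eq_factorial_mul_choose]; push_cast; rfl

/-- `E_p(a,b,x+z,x)` is the convolution of the coefficients `E_p(a,b,p,y)` with the binomial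
coefficients that arise from applying `R_q` to a tensor product. -/
lemma hahnE_eq_sum (p : ℕ) (a b : ℤ) (x z : ℕ) :
    hahnE p a b ((x : ℤ) + z) x =
      ∑ y ∈ Finset.range (p + 1),
        hahnLow p a b y * ((x.choose y : ℤ) * (z.choose (p - y) : ℤ)) := by
  have key : ∀ y ∈ Finset.range (p + 1),
      hahnLow p a b y * ((x.choose y : ℤ) * (z.choose (p - y) : ℤ)) ≠ 0 →
        (y ≤ x ∧ p ≤ y + z) := by
    intro y _ hne
    by_contra hcon
    apply hne
    rcases lt_or_ge x y with h | h
    · rw [Nat.choose_eq_zero_of_lt h]; simp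
    · rw [Nat.choose_eq_zero_of_lt (show z < p - y by omega)]; simp
  rw [← Finset.sum_filter_of_ne key, hahnE]
  refine Finset.sum_nbij' (fun j => j.toNat) (fun y => (y : ℤ)) ?_ ?_ ?_ ?_ ?_
  · intro j hj
    simp only [Finset.mem_Icc, Finset.mem_filter, Finset.mem_range] at hj ⊢
    omega
  · intro y hy
    simp only [Finset.mem_Icc, Finset.mem_filter, Finset.mem_range] at hy ⊢
    omega
  · intro j hj
    simp only [Finset.mem_Icc] at hj
    omega
  · intro y _
    simp
  · intro j hj
    simp only [Finset.mem_Icc] at hj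
    obtain ⟨y, rfl⟩ : ∃ y : ℕ, j = y := ⟨j.toNat, by omega⟩
    have hy : y ≤ p := by omega
    rw [Int.toNat_natCast, show (x : ℤ) - (x + z) = -(z : ℤ) by ring, poch_neg_natCast,
      poch_neg_natCast, hahnLow, ← Nat.choose_mul_factorial_mul_factorial hy]
    have h1 : ((-1 : ℤ)) ^ y * (-1) ^ y = 1 := by rw [← mul_pow]; simp
    push_cast
    linear_combination ((p.choose y : ℤ) * poch (b - p + 1) y * y.factorial * x.choose y *
      poch (a - p + 1) (p - y) * (-1) ^ (p - y) * (p - y).factorial * z.choose (p - y)) * h1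

/-- The two-term recursion that makes the lowest-degree function lie in the kernel of `d`. -/
lemma hahnLow_rec (p : ℕ) (a b : ℤ) (y : ℕ) (hy : y < p) :
    hahnLow p a b y * (b - p + 1 + y) + hahnLow p a b (y + 1) * (a - y) = 0 := by
  obtain ⟨q, rfl⟩ : ∃ q, p = y + 1 + q := ⟨p - (y + 1), by omega⟩
  simp only [hahnLow]
  rw [show y + 1 + q - y = q + 1 by omega, show y + 1 + q - (y + 1) = q by omega, poch_succ,
    poch_succ]
  push_cast
  ring

/-! ### The zeta transform -/

/-- The zeta transform `(ζ f)(B) = ∑_{A ⊆ B} f(A)`. If `f` is supported on `k`-subsets, its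
restriction to the `m`-subsets is `R_{m-k} f`. -/
def zetaT {n : ℕ} (f : Finset (Fin n) → ℂ) (B : Finset (Fin n)) : ℂ :=
  ∑ A ∈ B.powerset, f A

lemma zetaT_eq_zero_of_card_lt {n k : ℕ} {f : Finset (Fin n) → ℂ}
    (hf : ∀ s : Finset (Fin n), s.card ≠ k → f s = 0) {B : Finset (Fin n)} (hB : B.card < k) :
    zetaT f B = 0 := by
  refine Finset.sum_eq_zero fun A hA => hf A ?_
  have := Finset.card_le_card (Finset.mem_powerset.mp hA)
  omega

/-- The relation `R_q R_p = C(p+q, p) R_{p+q}`. -/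
lemma sum_powersetCard_zetaT {n k : ℕ} {f : Finset (Fin n) → ℂ}
    (hf : ∀ s : Finset (Fin n), s.card ≠ k → f s = 0) (B : Finset (Fin n)) {s : ℕ} (hs : k ≤ s) :
    ∑ A ∈ B.powersetCard s, zetaT f A = ((B.card - k).choose (s - k) : ℂ) * zetaT f B := by
  unfold zetaT
  rw [Finset.sum_comm' (t' := B.powerset)
    (s' := fun C => (B.powersetCard s).filter (fun A => C ⊆ A))]
  · rw [Finset.mul_sum]
    refine Finset.sum_congr rfl fun C hC => ?_
    rw [Finset.sum_const, nsmul_eq_mul]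
    by_cases hCk : C.card = k
    · have hCB := Finset.mem_powerset.mp hC
      congr 2
      rw [← hCk, ← Finset.card_sdiff_of_subset hCB, ← Finset.card_powersetCard]
      refine Finset.card_nbij' (fun A => A \ C) (fun D => D ∪ C) ?_ ?_ ?_ ?_
      · intro A hA
        simp only [Finset.coe_filter, Finset.mem_powersetCard, Set.mem_ofPred_eq,
          Finset.mem_coe] at hA ⊢
        exact ⟨Finset.sdiff_subset_sdiff hA.1.1 le_rfl, by
          rw [Finset.card_sdiff_of_subset hA.2, hA.1.2]⟩
      · intro D hD
        simp only [Finset.coe_filter, Finset.mem_powersetCard, Set.mem_ofPred_eq,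
          Finset.mem_coe] at hD ⊢
        have hdis : Disjoint D C := Finset.disjoint_of_subset_left hD.1 Finset.sdiff_disjoint
        refine ⟨⟨Finset.union_subset (hD.1.trans Finset.sdiff_subset) hCB, ?_⟩,
          Finset.subset_union_right⟩
        rw [Finset.card_union_of_disjoint hdis, hD.2]
        omega
      · intro A hA
        simp only [Finset.coe_filter, Finset.mem_powersetCard, Set.mem_ofPred_eq] at hA
        exact Finset.sdiff_union_of_subset hA.2
      · intro D hD
        simp only [Finset.mem_powersetCard, Finset.mem_coe] at hD
        exact Finset.union_sdiff_cancel_right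
          (Finset.disjoint_of_subset_left hD.1 Finset.sdiff_disjoint)
    · simp [hf C hCk]
  · intro A C
    simp only [Finset.mem_powersetCard, Finset.mem_powerset, Finset.mem_filter]
    constructor
    · rintro ⟨h1, h2⟩; exact ⟨⟨h1, h2⟩, h2.trans h1.1⟩
    · rintro ⟨⟨h1, h2⟩, _⟩; exact ⟨h1, h2⟩

/-- For `f ∈ S^{N-k,k}` over the ground set `S`, the relation
`d R_q f = (N - 2k - q + 1) R_{q-1} f`. -/
lemma sum_insert_zetaT {n k : ℕ} {f : Finset (Fin n) → ℂ} {S : Finset (Fin n)}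
    (hf : ∀ s : Finset (Fin n), s.card ≠ k → f s = 0)
    (hd : ∀ B ⊆ S, ∑ x ∈ S \ B, f (insert x B) = 0) {B : Finset (Fin n)} (hB : B ⊆ S) :
    ∑ x ∈ S \ B, zetaT f (insert x B) = ((S.card : ℂ) - B.card - k) * zetaT f B := by
  have h1 : ∀ x ∈ S \ B, zetaT f (insert x B) =
      zetaT f B + ∑ A ∈ B.powerset, f (insert x A) := by
    intro x hx
    exact Finset.sum_powerset_insert (Finset.mem_sdiff.mp hx).2 f
  rw [Finset.sum_congr rfl h1, Finset.sum_add_distrib, Finset.sum_const, Finset.sum_comm,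
    nsmul_eq_mul, Finset.card_sdiff_of_subset hB, Nat.cast_sub (Finset.card_le_card hB)]
  have h2 : ∀ A ∈ B.powerset, ∑ x ∈ S \ B, f (insert x A) = - ∑ x ∈ B \ A, f (insert x A) := by
    intro A hA
    have hAB := Finset.mem_powerset.mp hA
    rw [eq_neg_iff_add_eq_zero, ← hd A (hAB.trans hB), ← Finset.sum_union]
    · rw [Finset.sdiff_union_sdiff_cancel hB hAB]
    · exact Finset.disjoint_of_subset_right Finset.sdiff_subset Finset.sdiff_disjoint
  have h3 : ∑ A ∈ B.powerset, ∑ x ∈ B \ A, f (insert x A) = (k : ℂ) * zetaT f B := by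
    have h4 : (k : ℂ) * zetaT f B = ∑ C ∈ B.powerset, ∑ _x ∈ C, f C := by
      rw [zetaT, Finset.mul_sum]
      refine Finset.sum_congr rfl fun C _ => ?_
      rw [Finset.sum_const, nsmul_eq_mul]
      by_cases hC : C.card = k
      · rw [hC]
      · simp [hf C hC]
    rw [h4, Finset.sum_sigma', Finset.sum_sigma']
    refine Finset.sum_nbij' (fun q => ⟨insert q.2 q.1, q.2⟩) (fun q => ⟨q.1.erase q.2, q.2⟩)
      ?_ ?_ ?_ ?_ ?_
    · rintro ⟨A, x⟩ h
      simp only [Finset.mem_sigma, Finset.mem_powerset, Finset.mem_sdiff] at h ⊢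
      exact ⟨Finset.insert_subset h.2.1 h.1, Finset.mem_insert_self _ _⟩
    · rintro ⟨A, x⟩ h
      simp only [Finset.mem_sigma, Finset.mem_powerset, Finset.mem_sdiff] at h ⊢
      exact ⟨(Finset.erase_subset _ _).trans h.1, h.1 h.2, Finset.notMem_erase _ _⟩
    · rintro ⟨A, x⟩ h
      simp only [Finset.mem_sigma, Finset.mem_powerset, Finset.mem_sdiff] at h
      simp [Finset.erase_insert h.2.2]
    · rintro ⟨A, x⟩ h
      simp only [Finset.mem_sigma, Finset.mem_powerset] at h
      simp [Finset.insert_erase h.2]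
    · rintro ⟨A, x⟩ _
      rfl
  rw [Finset.sum_congr rfl h2, Finset.sum_neg_distrib, h3]
  ring

/-- `R_q f = 0` on `S^{N-k,k}` once `q > N - 2k`. The relation `sum_insert_zetaT` determines
`ζ f` at `B` from its values on larger sets, with a nonzero factor in this range, so descending
induction from the full set applies. -/
lemma zetaT_eq_zero_of_lt_card {n k : ℕ} {f : Finset (Fin n) → ℂ} {S : Finset (Fin n)}
    (hf : ∀ s : Finset (Fin n), s.card ≠ k → f s = 0)
    (hd : ∀ B ⊆ S, ∑ x ∈ S \ B, f (insert x B) = 0) {B : Finset (Fin n)} (hB : B ⊆ S)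
    (hc : S.card < B.card + k) : zetaT f B = 0 := by
  induction hr : S.card - B.card generalizing B with
  | zero =>
    have hBS : B = S := Finset.eq_of_subset_of_card_le hB (by omega)
    have h := sum_insert_zetaT hf hd hB
    subst hBS
    have hk : (k : ℂ) ≠ 0 := by
      have : k ≠ 0 := by omega
      exact_mod_cast this
    simpa [hk] using h
  | succ r ih =>
    have h := sum_insert_zetaT hf hd hB
    rw [Finset.sum_eq_zero] at h
    · have hne : (S.card : ℂ) - B.card - k ≠ 0 := by
        intro h0
        have : ((S.card : ℕ) : ℂ) = ((B.card + k : ℕ) : ℂ) := by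
          push_cast; linear_combination h0
        have := Nat.cast_injective this
        omega
      exact (mul_eq_zero.mp h.symm).resolve_left hne
    · intro x hx
      obtain ⟨hxS, hxB⟩ := Finset.mem_sdiff.mp hx
      have hcard := Finset.card_insert_of_notMem hxB
      exact ih (Finset.insert_subset hxS hB) (by omega) (by omega)

/-! ### Gluing two disjoint ground sets -/

/-- The lowest-degree function at an internal vertex with sons over the disjoint sets `S₁`, `S₂`:
on `k`-subsets `A` it is `E_p(a,b,p,|A ∩ S₂| - j) · (ζ f₁)(A ∩ S₁) · (ζ f₂)(A ∩ S₂)`. -/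
def glue {n : ℕ} (k j p : ℕ) (a b : ℤ) (S₁ S₂ : Finset (Fin n)) (f₁ f₂ : Finset (Fin n) → ℂ)
    (A : Finset (Fin n)) : ℂ :=
  if A.card = k then
    (hahnLow p a b ((A ∩ S₂).card - j) : ℂ) * (zetaT f₁ (A ∩ S₁) * zetaT f₂ (A ∩ S₂))
  else 0

lemma card_inter_add {n : ℕ} {S₁ S₂ B : Finset (Fin n)} (hdis : Disjoint S₁ S₂)
    (hB : B ⊆ S₁ ∪ S₂) : (B ∩ S₁).card + (B ∩ S₂).card = B.card := by
  rw [← Finset.card_union_of_disjoint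
    (Finset.disjoint_of_subset_left Finset.inter_subset_right
      (Finset.disjoint_of_subset_right Finset.inter_subset_right hdis)),
    ← Finset.inter_union_distrib_left, Finset.inter_eq_left.mpr hB]

/-- The glued function lies in the kernel of `d` over `S₁ ∪ S₂`. -/
lemma glue_ker {n i j p : ℕ} {S₁ S₂ : Finset (Fin n)} {f₁ f₂ : Finset (Fin n) → ℂ}
    (hdis : Disjoint S₁ S₂)
    (hf₁ : ∀ s : Finset (Fin n), s.card ≠ i → f₁ s = 0)
    (hd₁ : ∀ B ⊆ S₁, ∑ x ∈ S₁ \ B, f₁ (insert x B) = 0)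
    (hf₂ : ∀ s : Finset (Fin n), s.card ≠ j → f₂ s = 0)
    (hd₂ : ∀ B ⊆ S₂, ∑ x ∈ S₂ \ B, f₂ (insert x B) = 0)
    {B : Finset (Fin n)} (hB : B ⊆ S₁ ∪ S₂) :
    ∑ x ∈ (S₁ ∪ S₂) \ B, glue (i + j + p) j p ((S₂.card : ℤ) - 2 * j) ((S₁.card : ℤ) - 2 * i)
      S₁ S₂ f₁ f₂ (insert x B) = 0 := by
  set a : ℤ := (S₂.card : ℤ) - 2 * j with ha
  set b : ℤ := (S₁.card : ℤ) - 2 * i with hb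
  by_cases hc : B.card + 1 = i + j + p
  swap
  · refine Finset.sum_eq_zero fun x hx => ?_
    rw [glue, Finset.card_insert_of_notMem (Finset.mem_sdiff.mp hx).2, if_neg hc]
  have hsplit : (S₁ ∪ S₂) \ B = (S₁ \ (B ∩ S₁)) ∪ (S₂ \ (B ∩ S₂)) := by
    ext x; simp only [Finset.mem_sdiff, Finset.mem_union, Finset.mem_inter]; tauto
  rw [hsplit, Finset.sum_union (Finset.disjoint_of_subset_left Finset.sdiff_subset
    (Finset.disjoint_of_subset_right Finset.sdiff_subset hdis))]
  have hs₁ : ∀ x ∈ S₁ \ (B ∩ S₁), glue (i + j + p) j p a b S₁ S₂ f₁ f₂ (insert x B) =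
      (hahnLow p a b ((B ∩ S₂).card - j) : ℂ) * zetaT f₂ (B ∩ S₂) *
        zetaT f₁ (insert x (B ∩ S₁)) := by
    intro x hx
    simp only [Finset.mem_sdiff, Finset.mem_inter, not_and] at hx
    have hxB : x ∉ B := fun h => hx.2 h hx.1
    have hx₂ : x ∉ S₂ := Finset.disjoint_left.mp hdis hx.1
    rw [glue, Finset.card_insert_of_notMem hxB, if_pos hc, Finset.insert_inter_of_mem hx.1,
      Finset.insert_inter_of_notMem hx₂]
    ring
  have hs₂ : ∀ x ∈ S₂ \ (B ∩ S₂), glue (i + j + p) j p a b S₁ S₂ f₁ f₂ (insert x B) =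
      (hahnLow p a b ((B ∩ S₂).card + 1 - j) : ℂ) * zetaT f₁ (B ∩ S₁) *
        zetaT f₂ (insert x (B ∩ S₂)) := by
    intro x hx
    have hx' := hx
    simp only [Finset.mem_sdiff, Finset.mem_inter, not_and] at hx
    have hxB : x ∉ B := fun h => hx.2 h hx.1
    have hx₁ : x ∉ S₁ := Finset.disjoint_right.mp hdis hx.1
    rw [glue, Finset.card_insert_of_notMem hxB, if_pos hc, Finset.insert_inter_of_mem hx.1,
      Finset.insert_inter_of_notMem hx₁,
      Finset.card_insert_of_notMem (Finset.mem_sdiff.mp hx').2]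
    ring
  rw [Finset.sum_congr rfl hs₁, Finset.sum_congr rfl hs₂, ← Finset.mul_sum, ← Finset.mul_sum,
    sum_insert_zetaT hf₁ hd₁ Finset.inter_subset_right,
    sum_insert_zetaT hf₂ hd₂ Finset.inter_subset_right]
  rcases lt_or_ge (B ∩ S₁).card i with h₁ | h₁
  · rw [zetaT_eq_zero_of_card_lt hf₁ h₁]; ring
  rcases lt_or_ge (B ∩ S₂).card j with h₂ | h₂
  · rw [zetaT_eq_zero_of_card_lt hf₂ h₂]; ring
  have hadd := card_inter_add hdis hB
  obtain ⟨y, hy⟩ : ∃ y, (B ∩ S₂).card = j + y := ⟨(B ∩ S₂).card - j, by omega⟩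
  obtain ⟨z, hz⟩ : ∃ z, (B ∩ S₁).card = i + z := ⟨(B ∩ S₁).card - i, by omega⟩
  have hp : p = y + z + 1 := by omega
  have hrec := hahnLow_rec p a b y (by omega)
  rw [hy, hz, show j + y - j = y by omega, show j + y + 1 - j = y + 1 by omega]
  have hrec' : (hahnLow p a b y : ℂ) * (((S₁.card : ℂ) - 2 * i) - p + 1 + y) +
      (hahnLow p a b (y + 1) : ℂ) * (((S₂.card : ℂ) - 2 * j) - y) = 0 := by
    have := congrArg (fun t : ℤ => (t : ℂ)) hrec
    simp only [ha, hb] at this ⊢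
    push_cast at this
    exact this
  have hp' : (p : ℂ) = y + z + 1 := by exact_mod_cast hp
  push_cast
  rw [hp'] at hrec'
  linear_combination (zetaT f₁ (B ∩ S₁) * zetaT f₂ (B ∩ S₂)) * hrec'

lemma sum_powerset_split {n : ℕ} {S₁ S₂ B : Finset (Fin n)} (hdis : Disjoint S₁ S₂)
    (hB : B ⊆ S₁ ∪ S₂) (F : Finset (Fin n) → Finset (Fin n) → ℂ) :
    ∑ A ∈ B.powerset, F (A ∩ S₁) (A ∩ S₂) =
      ∑ A₂ ∈ (B ∩ S₂).powerset, ∑ A₁ ∈ (B ∩ S₁).powerset, F A₁ A₂ := by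
  rw [Finset.sum_comm, ← Finset.sum_product']
  refine Finset.sum_nbij' (fun A => (A ∩ S₁, A ∩ S₂)) (fun q => q.1 ∪ q.2) ?_ ?_ ?_ ?_ ?_
  · intro A hA
    simp only [Finset.mem_powerset, Finset.mem_product] at hA ⊢
    exact ⟨Finset.inter_subset_inter_right hA, Finset.inter_subset_inter_right hA⟩
  · rintro ⟨C, D⟩ h
    simp only [Finset.mem_powerset, Finset.mem_product] at h ⊢
    exact Finset.union_subset (h.1.trans Finset.inter_subset_left)
      (h.2.trans Finset.inter_subset_left)
  · intro A hA
    simp only [Finset.mem_powerset] at hA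
    rw [← Finset.inter_union_distrib_left, Finset.inter_eq_left.mpr (hA.trans hB)]
  · rintro ⟨C, D⟩ h
    simp only [Finset.mem_powerset, Finset.mem_product] at h
    have hC : C ⊆ S₁ := h.1.trans Finset.inter_subset_right
    have hD : D ⊆ S₂ := h.2.trans Finset.inter_subset_right
    have hCD : C ∩ S₂ = ∅ := Finset.disjoint_iff_inter_eq_empty.mp
      (Finset.disjoint_of_subset_left hC hdis)
    have hDC : D ∩ S₁ = ∅ := Finset.disjoint_iff_inter_eq_empty.mp
      (Finset.disjoint_of_subset_left hD hdis.symm)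
    rw [Prod.mk.injEq]
    simp only [Finset.union_inter_distrib_right, hCD, hDC, Finset.inter_eq_left.mpr hC,
      Finset.inter_eq_left.mpr hD, Finset.union_empty, Finset.empty_union, and_self]
  · intro A _
    rfl

/-- Applying `R_{m-k}` to the glued function replaces the coefficients `E_p(a,b,p,·)` by
`E_p(a,b,m-i-j,·)`. -/
lemma zetaT_glue {n i j p : ℕ} {S₁ S₂ : Finset (Fin n)} {f₁ f₂ : Finset (Fin n) → ℂ} {a b : ℤ}
    (hdis : Disjoint S₁ S₂)
    (hf₁ : ∀ s : Finset (Fin n), s.card ≠ i → f₁ s = 0)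
    (hf₂ : ∀ s : Finset (Fin n), s.card ≠ j → f₂ s = 0)
    {B : Finset (Fin n)} (hB : B ⊆ S₁ ∪ S₂) :
    zetaT (glue (i + j + p) j p a b S₁ S₂ f₁ f₂) B =
      (hahnE p a b ((B.card : ℤ) - i - j) (((B ∩ S₂).card : ℤ) - j) : ℂ) *
        (zetaT f₁ (B ∩ S₁) * zetaT f₂ (B ∩ S₂)) := by
  set k := i + j + p with hk
  have hadd := card_inter_add hdis hB
  have h1 : zetaT (glue k j p a b S₁ S₂ f₁ f₂) B =
      ∑ A₂ ∈ (B ∩ S₂).powerset, ∑ A₁ ∈ (B ∩ S₁).powerset,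
        if A₁.card + A₂.card = k then
          (hahnLow p a b (A₂.card - j) : ℂ) * (zetaT f₁ A₁ * zetaT f₂ A₂) else 0 := by
    rw [← sum_powerset_split hdis hB (fun A₁ A₂ => if A₁.card + A₂.card = k then
          (hahnLow p a b (A₂.card - j) : ℂ) * (zetaT f₁ A₁ * zetaT f₂ A₂) else 0)]
    refine Finset.sum_congr rfl fun A hA => ?_
    rw [glue, card_inter_add hdis ((Finset.mem_powerset.mp hA).trans hB)]
  have h2 : ∀ A₂ ∈ (B ∩ S₂).powerset, (∑ A₁ ∈ (B ∩ S₁).powerset,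
        if A₁.card + A₂.card = k then
          (hahnLow p a b (A₂.card - j) : ℂ) * (zetaT f₁ A₁ * zetaT f₂ A₂) else 0) =
      ∑ y ∈ Finset.range (p + 1), if A₂.card = j + y then
        (hahnLow p a b y : ℂ) * zetaT f₂ A₂ *
          (((B ∩ S₁).card - i).choose (p - y) * zetaT f₁ (B ∩ S₁)) else 0 := by
    intro A₂ _
    rcases lt_or_ge A₂.card j with hj | hj
    · rw [zetaT_eq_zero_of_card_lt hf₂ hj]; simp
    obtain ⟨y, hy⟩ : ∃ y, A₂.card = j + y := ⟨A₂.card - j, by omega⟩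
    simp only [hy, Nat.add_left_cancel_iff]
    rw [Finset.sum_ite_eq, show j + y - j = y by omega]
    rcases lt_or_ge p y with hyp | hyp
    · rw [if_neg (by simp; omega)]
      refine Finset.sum_eq_zero fun A₁ _ => ?_
      split_ifs with hA
      · rw [zetaT_eq_zero_of_card_lt hf₁ (by omega)]; ring
      · rfl
    · rw [if_pos (by simp; omega)]
      have h3 := sum_powersetCard_zetaT hf₁ (B ∩ S₁) (s := i + (p - y)) (by omega)
      rw [show i + (p - y) - i = p - y by omega] at h3
      rw [← h3, Finset.powersetCard_eq_filter, Finset.mul_sum, Finset.sum_filter]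
      refine Finset.sum_congr rfl fun A₁ _ => ?_
      by_cases hA : A₁.card = i + (p - y)
      · rw [if_pos hA, if_pos (by omega)]; ring
      · rw [if_neg hA, if_neg (by omega)]
  rw [h1, Finset.sum_congr rfl h2, Finset.sum_comm]
  rcases lt_or_ge (B ∩ S₁).card i with h₁ | h₁
  · rw [zetaT_eq_zero_of_card_lt hf₁ h₁]; simp
  rcases lt_or_ge (B ∩ S₂).card j with h₂ | h₂
  · rw [zetaT_eq_zero_of_card_lt hf₂ h₂, mul_zero, mul_zero]
    refine Finset.sum_eq_zero fun y _ => Finset.sum_eq_zero fun A hA => ?_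
    rw [zetaT_eq_zero_of_card_lt hf₂
      ((Finset.card_le_card (Finset.mem_powerset.mp hA)).trans_lt h₂)]
    simp
  have hE := hahnE_eq_sum p a b ((B ∩ S₂).card - j) ((B ∩ S₁).card - i)
  rw [show (((((B ∩ S₂).card - j : ℕ) : ℤ)) + (((B ∩ S₁).card - i : ℕ) : ℤ)) =
      (B.card : ℤ) - i - j by omega,
    show (((B ∩ S₂).card - j : ℕ) : ℤ) = ((B ∩ S₂).card : ℤ) - j by omega] at hE
  rw [hE]
  push_cast
  rw [Finset.sum_mul]
  refine Finset.sum_congr rfl fun y _ => ?_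
  have h4 := sum_powersetCard_zetaT hf₂ (B ∩ S₂) (s := j + y) (by omega)
  rw [show j + y - j = y by omega, Finset.powersetCard_eq_filter, Finset.sum_filter] at h4
  have h5 : ∀ A ∈ (B ∩ S₂).powerset, (if A.card = j + y then
        (hahnLow p a b y : ℂ) * zetaT f₂ A *
          (((B ∩ S₁).card - i).choose (p - y) * zetaT f₁ (B ∩ S₁)) else 0) =
      ((hahnLow p a b y : ℂ) * (((B ∩ S₁).card - i).choose (p - y) * zetaT f₁ (B ∩ S₁))) *
        (if A.card = j + y then zetaT f₂ A else 0) := by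
    intro A _
    split_ifs
    · ring
    · ring
  rw [Finset.sum_congr rfl h5, ← Finset.mul_sum, h4]
  ring

/-! ### Blocks and trees -/

lemma block_union (n o s t : ℕ) : block n o (s + t) = block n o s ∪ block n (o + s) t := by
  ext x
  simp only [block, Finset.mem_filter, Finset.mem_univ, true_and, Finset.mem_union]
  omega

lemma block_disjoint (n o s t : ℕ) : Disjoint (block n o s) (block n (o + s) t) := by
  rw [Finset.disjoint_left]
  intro x
  simp only [block, Finset.mem_filter, Finset.mem_univ, true_and]
  omega

lemma card_block {n o s : ℕ} (h : o + s ≤ n) : (block n o s).card = s := by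
  rw [← Finset.card_map Fin.valEmbedding]
  have : (block n o s).map Fin.valEmbedding = Finset.Ico o (o + s) := by
    ext x
    simp only [block, Finset.mem_map, Finset.mem_filter, Finset.mem_univ, true_and,
      Fin.valEmbedding_apply, Finset.mem_Ico]
    constructor
    · rintro ⟨y, hy, rfl⟩; exact hy
    · intro hx; exact ⟨⟨x, by omega⟩, hx, rfl⟩
  rw [this, Nat.card_Ico]; omega

lemma BT.two_mul_rlabel_le {t : BT} (h : t.valid) : 2 * t.rlabel ≤ t.size := by
  cases t with
  | leaf a => simp [BT.rlabel]
  | node κ l r =>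
    obtain ⟨_, _, h1, h2, _⟩ := h
    simp only [BT.rlabel, BT.size]
    omega

/-- The inductive form of the theorem, for a subtree over the block `S` it occupies: a single
function `f` of degree `k`, killed by `d` over `S`, has every `Φ(T(a), m, T_r(k))` as the degree
`m` part of its zeta transform. -/
lemma exists_lowest (n : ℕ) (t : BT) (ht : t.valid) (o : ℕ) (ho : o + t.size ≤ n) :
    ∃ f : Finset (Fin n) → ℂ, (∀ s : Finset (Fin n), s.card ≠ t.rlabel → f s = 0) ∧
      (∀ B ⊆ block n o t.size, ∑ x ∈ block n o t.size \ B, f (insert x B) = 0) ∧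
      ∀ m, t.rlabel ≤ m → m + t.rlabel ≤ t.size → ∀ B ⊆ block n o t.size,
        PhiT n t o m B = if B.card = m then zetaT f B else 0 := by
  induction t generalizing o with
  | leaf a =>
    refine ⟨fun A => if A = ∅ then 1 else 0, ?_, ?_, ?_⟩
    · intro s hs
      have : s ≠ ∅ := by rintro rfl; simp [BT.rlabel] at hs
      simp [this]
    · intro B _
      exact Finset.sum_eq_zero fun x _ => by simp
    · intro m _ _ B hB
      have hB' : B ⊆ block n o a := hB
      simp [PhiT, zetaT, hB']
  | node κ l r ihl ihr =>
    obtain ⟨hl, hr, hc1, hc2, hc3⟩ := ht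
    simp only [BT.size] at ho
    obtain ⟨f₁, hf₁, hd₁, hP₁⟩ := ihl hl o (by omega)
    obtain ⟨f₂, hf₂, hd₂, hP₂⟩ := ihr hr (o + l.size) (by omega)
    have hl2 := BT.two_mul_rlabel_le hl
    have hr2 := BT.two_mul_rlabel_le hr
    obtain ⟨p, hp⟩ : ∃ p, κ = l.rlabel + r.rlabel + p := ⟨κ - (l.rlabel + r.rlabel), by omega⟩
    have hp' : κ - l.rlabel - r.rlabel = p := by omega
    have hrl : (BT.node κ l r).rlabel = κ := rfl
    simp only [hrl, BT.size, block_union, PhiT, hp']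
    have hdis := block_disjoint n o l.size r.size
    have hcard₁ : (block n o l.size).card = l.size := card_block (by omega)
    have hcard₂ : (block n (o + l.size) r.size).card = r.size := card_block (by omega)
    set S₁ := block n o l.size
    set S₂ := block n (o + l.size) r.size
    refine ⟨glue κ r.rlabel p ((r.size : ℤ) - 2 * r.rlabel) ((l.size : ℤ) - 2 * l.rlabel)
      S₁ S₂ f₁ f₂, ?_, ?_, ?_⟩
    · intro s hs
      rw [glue, if_neg hs]
    · intro B hB
      have := glue_ker (p := p) hdis hf₁ hd₁ hf₂ hd₂ hB
      rwa [hcard₁, hcard₂, ← hp] at this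
    · intro m hm1 hm2 B hB
      have hadd := card_inter_add hdis hB
      have hterm : ∀ w ∈ Finset.Icc (max r.rlabel (l.rlabel + m - l.size))
          (min (r.size - r.rlabel) (m - l.rlabel)),
          ((hahnE p ((r.size : ℤ) - 2 * r.rlabel)
            ((l.size : ℤ) - 2 * l.rlabel) ((m : ℤ) - l.rlabel - r.rlabel)
            ((w : ℤ) - r.rlabel) : ℤ) : ℂ) *
          PhiT n l o (m - w) (B ∩ S₁) * PhiT n r (o + l.size) w (B ∩ S₂) =
          if (B ∩ S₂).card = w then if B.card = m then
            ((hahnE p ((r.size : ℤ) - 2 * r.rlabel)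
            ((l.size : ℤ) - 2 * l.rlabel) ((m : ℤ) - l.rlabel - r.rlabel)
            ((w : ℤ) - r.rlabel) : ℤ) : ℂ) * (zetaT f₁ (B ∩ S₁) * zetaT f₂ (B ∩ S₂))
            else 0 else 0 := by
        intro w hw
        rw [Finset.mem_Icc] at hw
        rw [hP₁ (m - w) (by omega) (by omega) _ Finset.inter_subset_right,
          hP₂ w (by omega) (by omega) _ Finset.inter_subset_right]
        by_cases h1 : (B ∩ S₂).card = w
        · by_cases h2 : B.card = m
          · rw [if_pos h1, if_pos h1, if_pos h2, if_pos (by omega)]; ring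
          · rw [if_pos h1, if_pos h1, if_neg h2, if_neg (by omega)]; ring
        · rw [if_neg h1, if_neg h1]; ring
      rw [Finset.sum_congr rfl hterm, Finset.sum_ite_eq]
      by_cases hBm : B.card = m
      swap
      · simp [hBm]
      rw [if_pos hBm, if_pos hBm, hp, zetaT_glue hdis hf₁ hf₂ hB, hBm]
      split_ifs with hw
      · rfl
      -- Outside the summation range one of the two factors has too small or too large degree.
      have hz : zetaT f₁ (B ∩ S₁) * zetaT f₂ (B ∩ S₂) = 0 := by
        rw [Finset.mem_Icc] at hw
        rcases lt_or_ge (B ∩ S₁).card l.rlabel with h | h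
        · rw [zetaT_eq_zero_of_card_lt hf₁ h, zero_mul]
        rcases lt_or_ge (B ∩ S₂).card r.rlabel with h' | h'
        · rw [zetaT_eq_zero_of_card_lt hf₂ h', mul_zero]
        rcases lt_or_ge S₁.card ((B ∩ S₁).card + l.rlabel) with h1 | h1
        · rw [zetaT_eq_zero_of_lt_card hf₁ hd₁ Finset.inter_subset_right h1, zero_mul]
        rcases lt_or_ge S₂.card ((B ∩ S₂).card + r.rlabel) with h2 | h2
        · rw [zetaT_eq_zero_of_lt_card hf₂ hd₂ Finset.inter_subset_right h2, mul_zero]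
        exact absurd (by omega) hw
      rw [hz, mul_zero]

lemma presBlocks_image {n : ℕ} {g : Equiv.Perm (Fin n)} (t : BT) (o : ℕ)
    (h : presBlocks n t o g) : (block n o t.size).image ⇑g = block n o t.size := by
  induction t generalizing o with
  | leaf a => exact h
  | node κ l r ihl ihr =>
    rw [BT.size, block_union, Finset.image_union, ihl o h.1, ihr _ h.2]

lemma image_inv_inter {n : ℕ} {g : Equiv.Perm (Fin n)} {S : Finset (Fin n)}
    (h : S.image ⇑g = S) (Z : Finset (Fin n)) :
    Z.image ⇑g⁻¹ ∩ S = (Z ∩ S).image ⇑g⁻¹ := by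
  have hS : S.image ⇑g⁻¹ = S := by
    conv_lhs => rw [← h]
    rw [Finset.image_image]
    have : (⇑g⁻¹ ∘ ⇑g) = id := by ext x; simp
    rw [this, Finset.image_id]
  rw [Finset.image_inter _ _ (Equiv.injective _), hS]

lemma PhiT_image_inv {n : ℕ} {g : Equiv.Perm (Fin n)} (t : BT) (o m : ℕ)
    (h : presBlocks n t o g) (Z : Finset (Fin n)) :
    PhiT n t o m (Z.image ⇑g⁻¹) = PhiT n t o m Z := by
  induction t generalizing o m Z with
  | leaf a =>
    have hS : (block n o a).image ⇑g = block n o a := h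
    have h1 : Z.image ⇑g⁻¹ ⊆ block n o a ↔ Z ⊆ block n o a := by
      rw [← Finset.inter_eq_left, image_inv_inter hS,
        (Finset.image_injective (Equiv.injective g⁻¹)).eq_iff, Finset.inter_eq_left]
    simp only [PhiT, h1, Finset.card_image_of_injective _ (Equiv.injective g⁻¹)]
  | node κ l r ihl ihr =>
    simp only [PhiT]
    refine Finset.sum_congr rfl fun w _ => ?_
    rw [image_inv_inter (presBlocks_image l o h.1), image_inv_inter (presBlocks_image r _ h.2),
      ihl _ _ h.1, ihr _ _ h.2]

/-- Theorem 3.8: `Φ(T(a), m, T_r(k))` is `S_a`-invariant and belongs to the subspace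
`R_{m-k}(S^{n-k,k})` of `M^{n-m,m}`. -/
theorem stmt12 (n : ℕ) (hn : 1 ≤ n) (t : BT) (hleaves : 2 ≤ t.nleaves)
    (hsize : t.size = n) (hpos : t.posParts) (hvalid : t.valid)
    (m : ℕ) (hm : m ≤ n) (hk1 : t.rlabel ≤ m) (hk2 : t.rlabel ≤ n - m) :
    (∀ g : Equiv.Perm (Fin n), presBlocks n t 0 g →
      permAct n g (PhiT n t 0 m) = PhiT n t 0 m) ∧
    (∃ f : Finset (Fin n) → ℂ, (∀ s : Finset (Fin n), s.card ≠ t.rlabel → f s = 0) ∧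
      dR n f = 0 ∧ RT n (m - t.rlabel) f = PhiT n t 0 m) := by
  refine ⟨fun g hg => ?_, ?_⟩
  · funext Z
    exact PhiT_image_inv t 0 m hg Z
  obtain ⟨f, hf, hd, hP⟩ := exists_lowest n t hvalid 0 (by omega)
  have hblock : block n 0 t.size = Finset.univ := by
    ext x
    simp only [block, Finset.mem_filter, Finset.mem_univ, true_and, iff_true]
    omega
  rw [hblock] at hd hP
  refine ⟨f, hf, ?_, ?_⟩
  · funext B
    rw [dR, Finset.compl_eq_univ_sdiff]
    exact hd B (Finset.subset_univ B)
  · funext B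
    rw [hP m hk1 (by omega) B (Finset.subset_univ B), RT]
    by_cases hB : B.card = m
    · rw [if_pos hB, if_pos (by omega), show B.card - (m - t.rlabel) = t.rlabel by omega, zetaT,
        Finset.powersetCard_eq_filter]
      refine Finset.sum_filter_of_ne fun A _ hA => ?_
      by_contra hc
      exact hA (hf A hc)
    · rw [if_neg hB]
      split_ifs with hq
      · refine Finset.sum_eq_zero fun A hA => hf A ?_
        rw [(Finset.mem_powersetCard.mp hA).2]
        omega
      · rfl
end
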